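/- arXiv:2512.09722 — 2 statements merged into one kernel-verified Lean document; each statement's English description precedes it below -/
import Mathlib

section
/- Let p ≥ 1 be an integer and k ≥ 2 an integer. Then the double sum over ℓ from 2 to k and over m from 0 to 2p−2 of (−1)^m · C(ℓ+m−2, m)/(k+m−1)! · C(ℓ+2p−m−4, 2p−m−2)/(k+2p−m−3)! equals 2·p!/((2p)!·(k−2)!·(p+k−2)!), where C(a,b) denotes the binomial coefficient. -/
open Nat in
noncomputable def FF (K a m n : ℕ) : ℝ :=
  (-1)^m * ((a+m)! * (a+n)!) / ((a ! * a !) * (m ! * n !) * ((K+1+m)! * (K+1+n)!))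

lemma FF_a (K a m n : ℕ) :
    FF K (a+1) m n * ((a:ℝ)+1)^2 = (a+1+m) * (a+1+n) * FF K a m n := by
  unfold FF
  rw [show a+1+m = (a+m)+1 by ring, show a+1+n = (a+n)+1 by ring]
  simp only [Nat.factorial_succ]
  have h1 : (a:ℝ)+1 ≠ 0 := by positivity
  push_cast
  field_simp
  ring

lemma FF_m (K a m n : ℕ) :
    FF K a (m+1) n * (((m:ℝ)+1) * (a+n+1) * (K+2+m)) =
      - (FF K a m (n+1) * ((a+m+1) * (n+1) * (K+2+n))) := by
  unfold FF
  simp only [← add_assoc]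
  rw [show K+1+m+1 = (K+1+m)+1 by ring, show K+1+n+1 = (K+1+n)+1 by ring]
  simp only [Nat.factorial_succ]
  have h1 : (K:ℝ)+1+m+1 ≠ 0 := by positivity
  have h2 : (K:ℝ)+1+n+1 ≠ 0 := by positivity
  push_cast
  field_simp
  ring

noncomputable def SS (K q a : ℕ) : ℝ := ∑ m ∈ Finset.range (2*q+1), FF K a m (2*q-m)


lemma partialsum (K q a m : ℕ) : ∀ n : ℕ, m + n = 2*q →
    ∑ i ∈ Finset.range m, (((K:ℝ)-a+q) * (FF K (a+1) i (2*q-i) * ((a:ℝ)+1)^2)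
      - (a+1)*(a+1+q)*(K-a) * FF K a i (2*q-i))
      = -(1/2) * FF K a m n * m * (K+1+m) * (a+1+n) := by
  induction m with
  | zero => intro n _; simp
  | succ m ih =>
    intro n h
    rw [Finset.sum_range_succ, ih (n+1) (by omega), show 2*q-m = n+1 by omega, FF_a]
    have h2 := FF_m K a m n
    have hq : (q:ℝ) = (m+n+1)/2 := by
      have : ((m+1+n : ℕ):ℝ) = ((2*q:ℕ):ℝ) := by rw [h]
      push_cast at this
      linarith
    rw [hq]
    push_cast
    linear_combination (1/2) * h2

lemma SS_rec (K q a : ℕ) :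
    ((K:ℝ)-a+q) * (a+1) * SS K q (a+1) = (a+1+q)*(K-a) * SS K q a := by
  have h := partialsum K q a (2*q) 0 (by omega)
  have key : ∑ i ∈ Finset.range (2*q+1), (((K:ℝ)-a+q) * (FF K (a+1) i (2*q-i) * ((a:ℝ)+1)^2)
      - (a+1)*(a+1+q)*(K-a) * FF K a i (2*q-i)) = 0 := by
    rw [Finset.sum_range_succ, h, Nat.sub_self, FF_a]
    push_cast
    ring
  rw [Finset.sum_sub_distrib, ← Finset.mul_sum, ← Finset.mul_sum, ← Finset.sum_mul] at key
  have h1 : (a:ℝ)+1 ≠ 0 := by positivity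
  apply mul_left_cancel₀ h1
  unfold SS
  linear_combination key

open Nat in
lemma partial0 (K q m : ℕ) : ∀ n : ℕ, m + n = 2*q →
    ∑ i ∈ Finset.range m, (2*(K:ℝ)+2+2*q) * FF K 0 i (2*q-i)
      = 1/((K ! : ℝ) * (K+1+2*q)!) - (-1)^m / (((K+m)! : ℝ) * (K+1+n)!) := by
  induction m with
  | zero => intro n h; obtain rfl : n = 2*q := by omega
            simp
  | succ m ih =>
    intro n h
    rw [Finset.sum_range_succ, ih (n+1) (by omega), show 2*q-m = n+1 by omega]
    have hq : (q:ℝ) = (m+n+1)/2 := by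
      have : ((m+1+n : ℕ):ℝ) = ((2*q:ℕ):ℝ) := by rw [h]
      push_cast at this
      linarith
    have : (2*(K:ℝ)+2+2*q) * FF K 0 m (n+1) = (-1)^m / (((K+m)! : ℝ) * (K+1+(n+1))!)
        - (-1)^(m+1) / (((K+(m+1))! : ℝ) * (K+1+n)!) := by
      unfold FF
      rw [hq, show K+1+(n+1) = K+n+1+1 by ring, show K+1+m = K+m+1 by ring,
        show K+(m+1) = K+m+1 by ring, show K+1+n = K+n+1 by ring]
      simp only [zero_add, Nat.factorial_succ, Nat.factorial_zero]
      have h1 : (K:ℝ)+m+1 ≠ 0 := by positivity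
      have h2 : (K:ℝ)+n+1 ≠ 0 := by positivity
      have h3 : (K:ℝ)+n+1+1 ≠ 0 := by positivity
      have h4 : (n:ℝ)+1 ≠ 0 := by positivity
      push_cast
      field_simp
      ring
    rw [this]; ring

open Nat in
lemma SS_zero (K q : ℕ) : SS K q 0 = 1 / (((K:ℝ)+1+q) * (K ! * (K+1+2*q)!)) := by
  have h := partial0 K q (2*q) 0 (by omega)
  have h0 : FF K 0 (2*q) 0 = 1 / (((K+1+2*q)! : ℝ) * (K+1)!) := by
    unfold FF
    simp
    field_simp
  have h2 : (2*(K:ℝ)+2+2*q) * SS K q 0 = 2 / ((K ! : ℝ) * (K+1+2*q)!) := by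
    unfold SS
    rw [Finset.mul_sum, Finset.sum_range_succ, h, Nat.sub_self, h0,
      show K+1+2*q = K+2*q+1 by ring]
    simp only [add_zero, Nat.factorial_succ, pow_mul]
    have h1 : (K:ℝ)+1 ≠ 0 := by positivity
    have h2 : (K:ℝ)+2*q+1 ≠ 0 := by positivity
    push_cast
    field_simp
    ring
  have h1 : (K:ℝ)+1+q ≠ 0 := by positivity
  rw [eq_div_iff (by positivity)]
  rw [eq_div_iff (by positivity)] at h2
  linear_combination (1/2) * h2

open Nat in
lemma SS_eq (K q a b : ℕ) (h : a + b = K) :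
    SS K q a = (q ! : ℝ) / ((K+q+1)! * (K+1+2*q)!) * ((a+q).choose q * (b+q).choose q) := by
  induction a generalizing b with
  | zero =>
    obtain rfl : b = K := by omega
    rw [SS_zero, Nat.add_choose b q, Nat.cast_div (Nat.factorial_mul_factorial_dvd_factorial_add b q) (by positivity)]
    simp only [zero_add, Nat.choose_self, Nat.factorial_succ]
    have h1 : (b:ℝ)+q+1 ≠ 0 := by positivity
    have h2 : (b:ℝ)+1+q ≠ 0 := by positivity
    push_cast
    field_simp
    ring
  | succ a ih =>
    have hr := SS_rec K q a
    rw [ih (b+1) (by omega)] at hr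
    have hK : (K:ℝ) = a + 1 + b := by rw [← h]; push_cast; ring
    have e1 : (((a+1+q).choose q : ℕ):ℝ) * (a+1) = (a+1+q) * (a+q).choose q := by
      have := Nat.choose_mul_succ_eq (a+q) q
      rw [show a+q+1-q = a+1 by omega] at this
      rw [show a+1+q = a+q+1 by ring]
      have := congrArg (Nat.cast : ℕ → ℝ) this
      push_cast at this
      linarith
    have e2 : (((b+1+q).choose q : ℕ):ℝ) * (b+1) = (b+1+q) * (b+q).choose q := by
      have := Nat.choose_mul_succ_eq (b+q) q
      rw [show b+q+1-q = b+1 by omega] at this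
      rw [show b+1+q = b+q+1 by ring]
      have := congrArg (Nat.cast : ℕ → ℝ) this
      push_cast at this
      linarith
    have n1 : ((b:ℝ)+1+q) * (a+1) ≠ 0 := by positivity
    apply mul_left_cancel₀ n1
    have k1 : (K:ℝ) - a = b + 1 := by rw [hK]; ring
    rw [k1] at hr
    rw [hr]
    generalize (q ! : ℝ) / ((K+q+1)! * (K+1+2*q)!) = c
    linear_combination (c * (a+1+q) * (a+q).choose q) * e2 - (c * (b+1+q) * (b+q).choose q) * e1

lemma vand (K q : ℕ) : ∑ a ∈ Finset.range (K+1), (((a+q).choose q : ℝ) * ((K-a+q).choose q : ℝ))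
    = ((K+2*q+1).choose (2*q+1) : ℝ) := by
  have h : (PowerSeries.invOneSubPow ℝ (q+1)).val * (PowerSeries.invOneSubPow ℝ (q+1)).val
      = (PowerSeries.invOneSubPow ℝ ((2*q+1)+1)).val := by
    rw [← Units.val_mul, ← PowerSeries.invOneSubPow_add]
    congr 2; ring
  have := congrArg (PowerSeries.coeff K) h
  rw [PowerSeries.coeff_mul] at this
  simp only [PowerSeries.invOneSubPow_val_succ_eq_mk_add_choose, PowerSeries.coeff_mk] at this
  rw [Finset.Nat.sum_antidiagonal_eq_sum_range_succ_mk] at this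
  rw [show K+2*q+1 = 2*q+1+K by ring, ← this]
  apply Finset.sum_congr rfl
  intro a _
  rw [add_comm a, add_comm (K-a)]

/-- **Summation identity (Lemma 5.4).** For integers `p ≥ 1` and `k ≥ 2`,
`∑_{ℓ=2}^k ∑_{m=0}^{2p−2} (−1)^m C(ℓ+m−2,m)/(k+m−1)! · C(ℓ+2p−m−4,2p−m−2)/(k+2p−m−3)!
  = 2·p!/((2p)!·(k−2)!·(p+k−2)!)`. -/
theorem stmt_0 (p k : ℕ) (hp : 1 ≤ p) (hk : 2 ≤ k) :
    ∑ l ∈ Finset.Icc 2 k, ∑ m ∈ Finset.range (2*p - 1),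
        (-1:ℝ)^m * ((l+m-2).choose m : ℝ) / ((k+m-1).factorial : ℝ)
          * ((l+2*p-m-4).choose (2*p-m-2) : ℝ) / ((k+2*p-m-3).factorial : ℝ)
      = 2 * (p.factorial : ℝ)
          / (((2*p).factorial : ℝ) * ((k-2).factorial : ℝ) * ((p+k-2).factorial : ℝ)) := by
  obtain ⟨q, rfl⟩ : ∃ q, p = q+1 := ⟨p-1, by omega⟩
  obtain ⟨K, rfl⟩ : ∃ K, k = K+2 := ⟨k-2, by omega⟩
  have h1 : ∀ a ∈ Finset.range (K+1), ∑ m ∈ Finset.range (2*(q+1) - 1),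
        (-1:ℝ)^m * ((a+2+m-2).choose m : ℝ) / ((K+2+m-1).factorial : ℝ)
          * ((a+2+2*(q+1)-m-4).choose (2*(q+1)-m-2) : ℝ) / ((K+2+2*(q+1)-m-3).factorial : ℝ)
      = (q.factorial : ℝ) / ((K+q+1).factorial * (K+1+2*q).factorial)
        * ((a+q).choose q * (K-a+q).choose q) := by
    intro a ha
    rw [Finset.mem_range] at ha
    rw [← SS_eq K q a (K-a) (by omega)]
    unfold SS
    rw [show 2*(q+1)-1 = 2*q+1 by omega]
    apply Finset.sum_congr rfl
    intro m hm
    rw [Finset.mem_range] at hm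
    obtain ⟨n, hn⟩ : ∃ n, m + n = 2*q := ⟨2*q-m, by omega⟩
    rw [show a+2+m-2 = a+m by omega, show K+2+m-1 = K+1+m by omega,
      show a+2+2*(q+1)-m-4 = a+n by omega, show 2*(q+1)-m-2 = n by omega,
      show K+2+2*(q+1)-m-3 = K+1+n by omega, show 2*q-m = n by omega]
    rw [Nat.add_choose a m, Nat.cast_div (Nat.factorial_mul_factorial_dvd_factorial_add a m) (by positivity),
      Nat.add_choose a n, Nat.cast_div (Nat.factorial_mul_factorial_dvd_factorial_add a n) (by positivity)]
    unfold FF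
    push_cast
    field_simp
  have h2 : Finset.Icc 2 (K+2) = (Finset.range (K+1)).image (· + 2) := by
    ext x
    simp only [Finset.mem_Icc, Finset.mem_image, Finset.mem_range]
    constructor
    · intro h; exact ⟨x-2, by omega, by omega⟩
    · rintro ⟨y, hy, rfl⟩; omega
  rw [h2, Finset.sum_image (by intro x _ y _ h; simpa using h), Finset.sum_congr rfl h1,
    ← Finset.mul_sum, vand, show K+2*q+1 = K+(2*q+1) by ring, Nat.add_choose K (2*q+1),
    Nat.cast_div (Nat.factorial_mul_factorial_dvd_factorial_add K (2*q+1)) (by positivity)]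
  rw [show K+2-2 = K by omega, show q+1+(K+2)-2 = K+q+1 by omega,
    show K+1+2*q = K+(2*q+1) by ring, show 2*(q+1) = 2*q+1+1 by ring,
    Nat.factorial_succ (2*q+1), Nat.factorial_succ q]
  have h3 : (2*(q:ℝ)+1+1) ≠ 0 := by positivity
  push_cast
  field_simp
  ring
end

section
/- Let p ≥ 1 be an integer, let 0 ≤ α₁ ≤ β₁ ≤ α₂ ≤ β₂ ≤ ⋯ ≤ α_p ≤ β_p ≤ π be real numbers, and let u ∈ (0, 1/2). Then (1/π) · ∫₀^π [∏_{i=1}^p (sin(αᵢ−γ)/sin(βᵢ−γ))^{2u} · 1{γ ∉ [αᵢ,βᵢ]}] dγ = sin(2u·(π − ∑_{i=1}^p (βᵢ−αᵢ))) / sin(2πu). Here the integrand is taken to be 0 whenever γ lies in one of the intervals [αᵢ,βᵢ], and on the complement of these intervals each ratio sin(αᵢ−γ)/sin(βᵢ−γ) is positive, so the real power (·)^{2u} is well defined. -/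
open Real

noncomputable def fac (s a b : ℝ) (z : ℂ) : ℂ :=
  Complex.exp (s * (Complex.log (1 - z * Complex.exp (-(2 * a * Complex.I)))
    - Complex.log (1 - z * Complex.exp (-(2 * b * Complex.I)))))

lemma kernel_int (s b : ℝ) (hs0 : 0 < s) (hs : s < 1) :
    IntervalIntegrable (fun γ : ℝ => |Real.sin (γ - b)| ^ (-s)) MeasureTheory.volume 0 π := by
  have hper : Function.Periodic (fun γ : ℝ => |Real.sin γ| ^ (-s)) π := by
    intro x
    simp [Real.sin_add_pi]
  have hmeas : Measurable (fun γ : ℝ => |Real.sin γ| ^ (-s)) := by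
    fun_prop
  have hx0 : IntervalIntegrable (fun x : ℝ => |x| ^ (-s)) MeasureTheory.volume (-(π/2)) (π/2) := by
    have h1 : IntervalIntegrable (fun x : ℝ => |x| ^ (-s)) MeasureTheory.volume 0 (π/2) := by
      refine (intervalIntegral.intervalIntegrable_rpow' (r := -s) (a := 0) (b := π/2) (by linarith)).congr ?_
      intro x hx
      rw [Set.uIoc_of_le (by positivity)] at hx
      simp only [abs_of_pos hx.1]
    have h2 := (IntervalIntegrable.iff_comp_neg (f := fun x : ℝ => |x| ^ (-s))).1 h1
    simp only [abs_neg, neg_zero] at h2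
    exact h2.symm.trans h1
  have h1 : IntervalIntegrable (fun γ : ℝ => |Real.sin γ| ^ (-s)) MeasureTheory.volume
      (-(π/2)) (-(π/2) + π) := by
    rw [show -(π/2) + π = π/2 by ring]
    refine (hx0.const_mul ((2/π)^(-s))).mono_fun hmeas.aestronglyMeasurable ?_
    rw [Filter.EventuallyLE, MeasureTheory.ae_restrict_iff' measurableSet_uIoc]
    have : ∀ᵐ x : ℝ, x ≠ 0 := by
      simp [MeasureTheory.ae_iff]
    filter_upwards [this] with x hx0 hx
    rw [Set.uIoc_of_le (by linarith [Real.pi_pos])] at hx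
    have hb := Real.mul_abs_le_abs_sin (x := x) (abs_le.2 ⟨hx.1.le, hx.2⟩)
    rw [← Real.mul_rpow (by positivity) (by positivity)]
    rw [Real.norm_of_nonneg (by positivity), Real.norm_of_nonneg (by positivity)]
    have hx0' : 0 < |x| := abs_pos.2 hx0
    exact Real.rpow_le_rpow_of_nonpos (by positivity) hb (by linarith)
  have h2 := (hper.intervalIntegrable Real.pi_ne_zero h1 (0 - b) (π - b)).comp_sub_right b
  simpa using h2

lemma two_bound (s x y d : ℝ) (hs0 : 0 < s) (hx : 0 < x) (hy : 0 < y) (hd : 0 < d)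
    (h : d ≤ x + y) : x ^ (-s) * y ^ (-s) ≤ (d/2)^(-s) * (x ^ (-s) + y ^ (-s)) := by
  have hx' : 0 < x ^ (-s) := by positivity
  have hy' : 0 < y ^ (-s) := by positivity
  have hd' : 0 < (d/2) ^ (-s) := by positivity
  rcases le_total x y with hxy | hxy
  · have := Real.rpow_le_rpow_of_nonpos (by positivity : 0 < d/2) (by linarith : d/2 ≤ y) (by linarith : -s ≤ 0)
    nlinarith [mul_le_mul_of_nonneg_left this hx'.le, mul_pos hd' hy']
  · have := Real.rpow_le_rpow_of_nonpos (by positivity : 0 < d/2) (by linarith : d/2 ≤ x) (by linarith : -s ≤ 0)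
    nlinarith [mul_le_mul_of_nonneg_right this hy'.le, mul_pos hd' hx']

lemma prod_bound {ι : Type*} [DecidableEq ι] (s : ℝ) (hs0 : 0 < s) (b : ι → ℝ) (T : Finset ι)
    (hT : ∀ i ∈ T, ∀ j ∈ T, i ≠ j → Real.sin (b i - b j) ≠ 0) :
    ∃ C : ℝ, 0 ≤ C ∧ ∀ γ : ℝ, (∀ i ∈ T, Real.sin (γ - b i) ≠ 0) →
      ∏ i ∈ T, |Real.sin (γ - b i)| ^ (-s) ≤ C * (1 + ∑ i ∈ T, |Real.sin (γ - b i)| ^ (-s)) := by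
  induction T using Finset.induction_on with
  | empty => exact ⟨1, by norm_num, fun γ _ => by simp⟩
  | insert j T hj ih =>
    obtain ⟨C, hC, h⟩ := ih (fun i hi k hk => hT i (Finset.mem_insert_of_mem hi) k (Finset.mem_insert_of_mem hk))
    set K : ι → ℝ := fun i => (|Real.sin (b i - b j)| / 2) ^ (-s) with hK
    have hK0 : ∀ i, 0 ≤ K i := fun i => by simp only [hK]; positivity
    have hS0 : 0 ≤ ∑ i ∈ T, K i := Finset.sum_nonneg fun i _ => hK0 i
    refine ⟨C * (1 + ∑ i ∈ T, K i), by positivity, fun γ hγ => ?_⟩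
    have h' := h γ (fun i hi => hγ i (Finset.mem_insert_of_mem hi))
    rw [Finset.prod_insert hj, Finset.sum_insert hj]
    set x := |Real.sin (γ - b j)| ^ (-s) with hx
    have hx0 : 0 ≤ x := by positivity
    set f : ι → ℝ := fun i => |Real.sin (γ - b i)| ^ (-s) with hf
    have hf0 : ∀ i, 0 ≤ f i := fun i => by simp only [hf]; positivity
    have hkey : ∀ i ∈ T, x * f i ≤ K i * (x + f i) := by
      intro i hi
      have hij : i ≠ j := fun h => hj (h ▸ hi)
      refine two_bound s _ _ _ hs0 (abs_pos.2 (hγ j (Finset.mem_insert_self _ _)))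
        (abs_pos.2 (hγ i (Finset.mem_insert_of_mem hi)))
        (abs_pos.2 (hT i (Finset.mem_insert_of_mem hi) j (Finset.mem_insert_self _ _) hij)) ?_
      rw [show b i - b j = (γ - b j) - (γ - b i) by ring, Real.sin_sub]
      refine (abs_sub _ _).trans ?_
      rw [abs_mul, abs_mul]
      have h1 := Real.abs_cos_le_one (γ - b i)
      have h2 := Real.abs_cos_le_one (γ - b j)
      have h3 := abs_nonneg (Real.sin (γ - b i))
      have h4 := abs_nonneg (Real.sin (γ - b j))
      nlinarith
    have hfS : ∀ i ∈ T, f i ≤ ∑ i ∈ T, f i := fun i hi =>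
      Finset.single_le_sum (f := f) (fun i _ => hf0 i) hi
    have hsum : x * ∑ i ∈ T, f i ≤ (∑ i ∈ T, K i) * (x + ∑ i ∈ T, f i) := by
      rw [Finset.mul_sum, Finset.sum_mul]
      refine Finset.sum_le_sum fun i hi => (hkey i hi).trans ?_
      exact mul_le_mul_of_nonneg_left (by linarith [hfS i hi]) (hK0 i)
    have hF0 : 0 ≤ ∑ i ∈ T, f i := Finset.sum_nonneg fun i _ => hf0 i
    calc x * ∏ i ∈ T, f i ≤ x * (C * (1 + ∑ i ∈ T, f i)) := mul_le_mul_of_nonneg_left h' hx0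
      _ = C * (x + x * ∑ i ∈ T, f i) := by ring
      _ ≤ C * ((1 + ∑ i ∈ T, K i) * (1 + (x + ∑ i ∈ T, f i))) := by
        refine mul_le_mul_of_nonneg_left ?_ hC
        nlinarith
      _ = _ := by ring

lemma one_sub_exp (x : ℝ) : (1 : ℂ) - Complex.exp (2 * x * Complex.I)
    = (2 * Real.sin x : ℝ) * Complex.exp ((x - π/2) * Complex.I) := by
  have h1 : Complex.exp ((x - π/2) * Complex.I) = Complex.exp (x * Complex.I) * (-Complex.I) := by
    rw [sub_mul, sub_eq_add_neg, Complex.exp_add, ← neg_mul]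
    congr 1
    have := Complex.exp_neg_pi_div_two_mul_I
    rw [← this]; ring_nf
  have h2 : Complex.exp (2 * x * Complex.I) = Complex.exp (x * Complex.I) * Complex.exp (x * Complex.I) := by
    rw [← Complex.exp_add]; ring_nf
  rw [h1, h2]
  push_cast
  rw [Complex.exp_mul_I]
  have h3 := Complex.sin_sq_add_cos_sq (x:ℂ)
  linear_combination (-1 : ℂ) * h3 + (Complex.sin x ^ 2 ) * Complex.I_sq

lemma log_pos_case (x : ℝ) (h0 : 0 < x) (h1 : x < π) :
    Complex.log (1 - Complex.exp (2 * x * Complex.I))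
      = (Real.log (2 * |Real.sin x|) : ℝ) + (x - π/2 : ℝ) * Complex.I := by
  have hs := Real.sin_pos_of_pos_of_lt_pi h0 h1
  rw [one_sub_exp, abs_of_pos hs, Complex.log_ofReal_mul (by positivity) (Complex.exp_ne_zero _)]
  congr 1
  rw [Complex.log_exp]
  · push_cast; ring
  · simp; linarith
  · simp; linarith

lemma log_neg_case (x : ℝ) (h0 : -π < x) (h1 : x < 0) :
    Complex.log (1 - Complex.exp (2 * x * Complex.I))
      = (Real.log (2 * |Real.sin x|) : ℝ) + (x + π/2 : ℝ) * Complex.I := by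
  have hs := Real.sin_neg_of_neg_of_neg_pi_lt h1 h0
  have : Complex.exp ((x - π/2) * Complex.I) = - Complex.exp ((x + π/2) * Complex.I) := by
    rw [show ((x:ℂ) + π/2) * Complex.I = (x - π/2) * Complex.I + π * Complex.I by ring, Complex.exp_add,
      Complex.exp_pi_mul_I]; ring
  rw [one_sub_exp, abs_of_neg hs, this, show ((2 * Real.sin x : ℝ) : ℂ) * - Complex.exp ((x + π/2) * Complex.I)
    = (2 * - Real.sin x : ℝ) * Complex.exp ((x + π/2) * Complex.I) by push_cast; ring,
    Complex.log_ofReal_mul (by linarith) (Complex.exp_ne_zero _)]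
  congr 1
  rw [Complex.log_exp]
  · push_cast; ring
  · simp; linarith
  · simp; linarith

lemma arg_rw (γ a : ℝ) (r : ℂ) : r * Complex.exp (2 * γ * Complex.I) * Complex.exp (-(2 * a * Complex.I))
    = r * Complex.exp (2 * (γ - a : ℝ) * Complex.I) := by
  rw [mul_assoc, ← Complex.exp_add]; congr 2; push_cast; ring

lemma fac_out (s a b γ : ℝ) (ha0 : 0 ≤ a) (hab : a ≤ b) (hbpi : b ≤ π) (hγ0 : 0 < γ) (hγ : γ < π)
    (h : γ < a ∨ b < γ) :
    fac s a b (Complex.exp (2 * γ * Complex.I)) =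
      ((Real.sin (a - γ) / Real.sin (b - γ)) ^ s : ℝ) * Complex.exp (s * (b - a : ℝ) * Complex.I) := by
  unfold fac
  have e1 := arg_rw γ a 1
  have e2 := arg_rw γ b 1
  simp only [one_mul] at e1 e2
  rw [e1, e2]
  rcases h with h | h
  · have p1 := Real.sin_pos_of_pos_of_lt_pi (x := a - γ) (by linarith) (by linarith)
    have p2 := Real.sin_pos_of_pos_of_lt_pi (x := b - γ) (by linarith) (by linarith)
    rw [log_neg_case _ (by linarith) (by linarith), log_neg_case _ (by linarith) (by linarith)]
    rw [Real.rpow_def_of_pos (by positivity), Complex.ofReal_exp, ← Complex.exp_add]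
    rw [← abs_neg (Real.sin (γ - a)), ← abs_neg (Real.sin (γ - b)), ← Real.sin_neg, ← Real.sin_neg, neg_sub, neg_sub,
      abs_of_pos p1, abs_of_pos p2, Real.log_div p1.ne' p2.ne', Real.log_mul (by norm_num) p1.ne',
      Real.log_mul (by norm_num) p2.ne']
    congr 1
    push_cast; ring
  · have p1 := Real.sin_pos_of_pos_of_lt_pi (x := γ - a) (by linarith) (by linarith)
    have p2 := Real.sin_pos_of_pos_of_lt_pi (x := γ - b) (by linarith) (by linarith)
    rw [log_pos_case _ (by linarith) (by linarith), log_pos_case _ (by linarith) (by linarith)]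
    rw [← neg_sub γ a, ← neg_sub γ b, Real.sin_neg, Real.sin_neg, neg_div_neg_eq]
    rw [Real.rpow_def_of_pos (by positivity), Complex.ofReal_exp, ← Complex.exp_add]
    rw [abs_of_pos p1, abs_of_pos p2, Real.log_div p1.ne' p2.ne', Real.log_mul (by norm_num) p1.ne',
      Real.log_mul (by norm_num) p2.ne']
    congr 1
    push_cast; ring

lemma fac_in (s a b γ : ℝ) (ha0 : 0 ≤ a) (hbpi : b ≤ π) (h1 : a < γ) (h2 : γ < b) :
    ∃ R : ℝ, fac s a b (Complex.exp (2 * γ * Complex.I)) =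
      R * Complex.exp (s * (b - a - π : ℝ) * Complex.I) := by
  unfold fac
  have e1 := arg_rw γ a 1
  have e2 := arg_rw γ b 1
  simp only [one_mul] at e1 e2
  rw [e1, e2, log_pos_case _ (by linarith) (by linarith), log_neg_case _ (by linarith) (by linarith)]
  refine ⟨Real.exp (s * (Real.log (2 * |Real.sin (γ - a)|) - Real.log (2 * |Real.sin (γ - b)|))), ?_⟩
  rw [Complex.ofReal_exp, ← Complex.exp_add]
  congr 1
  push_cast; ring

lemma fac_norm (s a b : ℝ) (z : ℂ) (h1 : 1 - z * Complex.exp (-(2 * a * Complex.I)) ≠ 0)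
    (h2 : 1 - z * Complex.exp (-(2 * b * Complex.I)) ≠ 0) :
    ‖fac s a b z‖ = ‖1 - z * Complex.exp (-(2 * a * Complex.I))‖ ^ s *
      (‖1 - z * Complex.exp (-(2 * b * Complex.I))‖ ^ s)⁻¹ := by
  unfold fac
  rw [Complex.norm_exp, Real.rpow_def_of_pos (norm_pos_iff.2 h1), Real.rpow_def_of_pos (norm_pos_iff.2 h2),
    ← Real.exp_neg, ← Real.exp_add]
  congr 1
  simp [Complex.log_re]
  ring

lemma norm_lower (r x : ℝ) (hr0 : 0 ≤ r) (hr : r ≤ 1) :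
    |Real.sin x| ≤ ‖1 - (r:ℂ) * Complex.exp (2 * x * Complex.I)‖ := by
  have hE : ‖Complex.exp (2 * x * Complex.I)‖ = 1 := by
    rw [show (2 * x * Complex.I : ℂ) = ((2 * x : ℝ) : ℂ) * Complex.I by push_cast; ring,
      Complex.norm_exp_ofReal_mul_I]
  have h1 : ‖(1 : ℂ) - Complex.exp (2 * x * Complex.I)‖ = 2 * |Real.sin x| := by
    rw [one_sub_exp, norm_mul, show ((x:ℂ) - π/2) * Complex.I = ((x - π/2 : ℝ) : ℂ) * Complex.I by push_cast; ring,
      Complex.norm_exp_ofReal_mul_I, Complex.norm_real, Real.norm_eq_abs, abs_mul]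
    norm_num
  have h2 : ‖(1 : ℂ) - Complex.exp (2 * x * Complex.I)‖ ≤ ‖1 - (r:ℂ) * Complex.exp (2 * x * Complex.I)‖
      + (1 - r) := by
    have : (1 : ℂ) - Complex.exp (2 * x * Complex.I) = (1 - (r:ℂ) * Complex.exp (2 * x * Complex.I)) -
      ((1 - r : ℝ) : ℂ) * Complex.exp (2 * x * Complex.I) := by push_cast; ring
    rw [this]
    refine (norm_sub_le _ _).trans ?_
    rw [norm_mul, hE, Complex.norm_real, Real.norm_of_nonneg (by linarith)]
    linarith
  have h3 : 1 - r ≤ ‖1 - (r:ℂ) * Complex.exp (2 * x * Complex.I)‖ := by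
    have := norm_sub_norm_le (1:ℂ) ((r:ℂ) * Complex.exp (2 * x * Complex.I))
    rw [norm_mul, hE, Complex.norm_real, Real.norm_of_nonneg hr0] at this
    simpa using this
  linarith

lemma norm_upper (r x : ℝ) (hr0 : 0 ≤ r) (hr : r ≤ 1) :
    ‖1 - (r:ℂ) * Complex.exp (2 * x * Complex.I)‖ ≤ 2 := by
  have hE : ‖Complex.exp (2 * x * Complex.I)‖ = 1 := by
    rw [show (2 * x * Complex.I : ℂ) = ((2 * x : ℝ) : ℂ) * Complex.I by push_cast; ring,
      Complex.norm_exp_ofReal_mul_I]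
  refine (norm_sub_le _ _).trans ?_
  rw [norm_mul, hE, Complex.norm_real, Real.norm_of_nonneg hr0]
  simp; linarith

lemma slit_lt (z : ℂ) (a : ℝ) (hz : ‖z‖ < 1) :
    1 - z * Complex.exp (-(2 * a * Complex.I)) ∈ Complex.slitPlane := by
  rw [sub_eq_add_neg]
  apply Complex.mem_slitPlane_of_norm_lt_one
  rw [norm_neg, norm_mul, show (-(2 * a * Complex.I) : ℂ) = ((-(2 * a) : ℝ) : ℂ) * Complex.I by push_cast; ring,
      Complex.norm_exp_ofReal_mul_I]
  simpa

lemma fac_diff (s a b : ℝ) (z : ℂ) (hz : ‖z‖ < 1) : DifferentiableAt ℂ (fac s a b) z := by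
  unfold fac
  have h1 := slit_lt z a hz
  have h2 := slit_lt z b hz
  fun_prop (disch := assumption)

lemma slit_bd (γ a : ℝ) (h : Real.sin (γ - a) ≠ 0) :
    1 - Complex.exp (2 * γ * Complex.I) * Complex.exp (-(2 * a * Complex.I)) ∈ Complex.slitPlane := by
  have e1 := arg_rw γ a 1
  simp only [one_mul] at e1
  rw [e1]
  left
  rw [show (2 * ((γ - a : ℝ) : ℂ) * Complex.I : ℂ) = ((2 * (γ - a) : ℝ) : ℂ) * Complex.I by push_cast; ring]
  simp only [Complex.sub_re, Complex.one_re, Complex.exp_ofReal_mul_I_re]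
  rw [Real.cos_two_mul]
  have := Real.sin_sq_add_cos_sq (γ - a)
  have := pow_pos (abs_pos.2 h) 2
  rw [sq_abs] at this
  linarith

lemma fac_cont (s a b γ : ℝ) (h1 : Real.sin (γ - a) ≠ 0) (h2 : Real.sin (γ - b) ≠ 0) :
    ContinuousAt (fac s a b) (Complex.exp (2 * γ * Complex.I)) := by
  unfold fac
  have h1 := slit_bd γ a h1
  have h2 := slit_bd γ b h2
  fun_prop (disch := assumption)

lemma mono_facts (n : ℕ) (α β : Fin (n+1) → ℝ) (hαβ : ∀ i, α i ≤ β i)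
    (hβα : ∀ i : Fin (n+1), ∀ h : i.val + 1 < n+1, β i ≤ α ⟨i.val + 1, h⟩) :
    ∀ i j : Fin (n+1), i < j → β i ≤ α j := by
  have key : ∀ k : ℕ, ∀ i : Fin (n+1), ∀ h : i.val + 1 + k < n + 1, β i ≤ α ⟨i.val + 1 + k, h⟩ := by
    intro k
    induction k with
    | zero => intro i h; exact hβα i h
    | succ k ih =>
      intro i h
      have h' : i.val + 1 + k < n + 1 := by omega
      exact (ih i h').trans ((hαβ _).trans (hβα ⟨i.val + 1 + k, h'⟩ (by simp only; omega)))
  intro i j hij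
  have hij' : i.val < j.val := hij
  have := key (j.val - i.val - 1) i (by omega)
  convert this using 2
  ext; simp; omega

lemma sin_zero_cases (x : ℝ) (h0 : 0 ≤ x) (h1 : x ≤ π) (h : Real.sin x = 0) : x = 0 ∨ x = π := by
  by_contra hc
  push Not at hc
  have := Real.sin_pos_of_pos_of_lt_pi (lt_of_le_of_ne h0 (Ne.symm hc.1)) (lt_of_le_of_ne h1 hc.2)
  linarith

lemma distinct (n : ℕ) (α β : Fin (n+1) → ℝ) (hαβ : ∀ i, α i ≤ β i)
    (hm : ∀ i j : Fin (n+1), i < j → β i ≤ α j) (h0 : ∀ i, 0 ≤ α i) (hpi : ∀ i, β i ≤ π)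
    (i j : Fin (n+1)) (hij : i < j) (hi : Real.sin (α (i+1) - β i) ≠ 0)
    (hj : Real.sin (α (j+1) - β j) ≠ 0) : Real.sin (β j - β i) ≠ 0 := by
  intro h
  have hi1 : (i + 1 : Fin (n+1)).val = i.val + 1 := by
    apply Fin.val_add_one_of_lt
    exact lt_of_lt_of_le hij (Fin.le_last j)
  have hij' : i.val < j.val := hij
  have hii : i < i + 1 := by rw [Fin.lt_def, hi1]; omega
  have hle : α (i+1) ≤ β j := by
    rcases eq_or_ne (i+1) j with e | e
    · rw [e]; exact hαβ j
    · have : i + 1 < j := by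
        have : (i+1).val ≠ j.val := fun h => e (Fin.ext h)
        rw [Fin.lt_def]; omega
      linarith [hαβ (i+1), hm _ _ this, hαβ j]
  have := hm i (i+1) hii
  have := h0 i
  have := hαβ i
  have := hpi j
  rcases sin_zero_cases (β j - β i) (by linarith) (by linarith) h with h | h
  · apply hi
    rw [show α (i+1) - β i = 0 by linarith, Real.sin_zero]
  · apply hj
    rcases eq_or_ne j (Fin.last n) with e | e
    · have e2 : j + 1 = 0 := by rw [e]; simp
      have : α 0 = 0 := by
        have h00 := h0 0
        rcases eq_or_ne i 0 with e3 | e3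
        · subst e3; linarith
        · have := hm 0 i (Fin.pos_of_ne_zero e3)
          have := hαβ 0
          linarith
      rw [e2, this, show β j = π by linarith]; simp
    · have hj1 : (j + 1 : Fin (n+1)).val = j.val + 1 := by
        apply Fin.val_add_one_of_lt
        exact lt_of_le_of_ne (Fin.le_last j) e
      have := hm j (j+1) (by rw [Fin.lt_def, hj1]; omega)
      have := hαβ (j+1)
      have := hpi (j+1)
      rw [show α (j+1) - β j = 0 by linarith, Real.sin_zero]

lemma exp_norm_lt (r γ : ℝ) (hr0 : 0 ≤ r) (hr : r < 1) : ‖(r:ℂ) * Complex.exp (2 * γ * Complex.I)‖ < 1 := by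
  rw [norm_mul, show (2 * γ * Complex.I : ℂ) = ((2 * γ : ℝ) : ℂ) * Complex.I by push_cast; ring,
      Complex.norm_exp_ofReal_mul_I, Complex.norm_real, Real.norm_of_nonneg hr0]
  linarith

lemma domin (n : ℕ) (s : ℝ) (hs0 : 0 < s) (α β : Fin (n+1) → ℝ) (hαβ : ∀ i, α i ≤ β i)
    (hm : ∀ i j : Fin (n+1), i < j → β i ≤ α j) (h0 : ∀ i, 0 ≤ α i) (hpi : ∀ i, β i ≤ π) :
    ∃ C : ℝ, ∃ T : Finset (Fin (n+1)), ∀ r γ : ℝ, 0 ≤ r → r < 1 → (∀ i, Real.sin (γ - β i) ≠ 0) →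
      ‖∏ i, fac s (α i) (β i) (r * Complex.exp (2 * γ * Complex.I))‖
        ≤ C * (1 + ∑ i ∈ T, |Real.sin (γ - β i)| ^ (-s)) := by
  classical
  set T : Finset (Fin (n+1)) := Finset.univ.filter fun i => Real.sin (α (i+1) - β i) ≠ 0 with hT
  obtain ⟨C, hC, h⟩ := prod_bound s hs0 β T (by
    intro i hi j hj hij
    simp only [hT, Finset.mem_filter, Finset.mem_univ, true_and] at hi hj
    rcases lt_or_gt_of_ne hij with h | h
    · have := distinct n α β hαβ hm h0 hpi i j h hi hj
      rw [← neg_sub, Real.sin_neg]; simpa using this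
    · exact distinct n α β hαβ hm h0 hpi j i h hj hi)
  refine ⟨(∏ i ∈ T, (2:ℝ)^s) * C, T, fun r γ hr0 hr hγ => ?_⟩
  have hz := exp_norm_lt r γ hr0 hr
  set d : ℝ → ℝ := fun t => ‖1 - (r:ℂ) * Complex.exp (2 * (γ - t : ℝ) * Complex.I)‖ with hd
  have hdpos : ∀ t, 0 < d t := by
    intro t
    have := Complex.slitPlane_ne_zero (slit_lt _ t hz)
    rw [arg_rw] at this
    exact norm_pos_iff.2 this
  have e1 : ‖∏ i, fac s (α i) (β i) (r * Complex.exp (2 * γ * Complex.I))‖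
      = ∏ i, (d (α i)) ^ s * ((d (β i)) ^ s)⁻¹ := by
    rw [norm_prod]
    refine Finset.prod_congr rfl fun i _ => ?_
    rw [fac_norm _ _ _ _ (Complex.slitPlane_ne_zero (slit_lt _ _ hz)) (Complex.slitPlane_ne_zero (slit_lt _ _ hz)),
      arg_rw, arg_rw]
  have e2 : ∏ i, (d (α i)) ^ s * ((d (β i)) ^ s)⁻¹ = ∏ i, (d (α (i+1))) ^ s * ((d (β i)) ^ s)⁻¹ := by
    rw [Finset.prod_mul_distrib, Finset.prod_mul_distrib]
    congr 1
    exact (Equiv.prod_comp (Equiv.addRight (1 : Fin (n+1))) (fun i => d (α i) ^ s)).symm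
  have e3 : ∏ i, (d (α (i+1))) ^ s * ((d (β i)) ^ s)⁻¹ = ∏ i ∈ T, (d (α (i+1))) ^ s * ((d (β i)) ^ s)⁻¹ := by
    symm
    apply Finset.prod_subset (Finset.subset_univ _)
    intro i _ hi
    simp only [hT, Finset.mem_filter, Finset.mem_univ, true_and, not_not] at hi
    have : d (α (i+1)) = d (β i) := by
      simp only [hd]
      have h1 := one_sub_exp (α (i+1) - β i)
      rw [hi] at h1
      simp only [mul_zero, Complex.ofReal_zero, zero_mul] at h1
      have h2 : Complex.exp (2 * ((γ - β i : ℝ) : ℂ) * Complex.I)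
        = Complex.exp (2 * ((γ - α (i+1) : ℝ) : ℂ) * Complex.I) * Complex.exp (2 * ((α (i+1) - β i : ℝ) : ℂ) * Complex.I) := by
        rw [← Complex.exp_add]; congr 1; push_cast; ring
      rw [h2, ← sub_eq_zero.1 h1, mul_one]
    rw [this]
    have := hdpos (β i)
    exact mul_inv_cancel₀ (by positivity)
  rw [e1, e2, e3]
  calc _ ≤ ∏ i ∈ T, ((2:ℝ)^s * |Real.sin (γ - β i)| ^ (-s)) := by
        refine Finset.prod_le_prod (fun i _ => ?_) (fun i _ => ?_)
        · have := hdpos (β i); have := hdpos (α (i+1)); positivity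
        · have h1 := hdpos (β i)
          have h2 := hdpos (α (i+1))
          have h3 := abs_pos.2 (hγ i)
          rw [← Real.rpow_neg h1.le]
          refine mul_le_mul ?_ ?_ (by positivity) (by positivity)
          · exact Real.rpow_le_rpow h2.le (norm_upper r _ hr0 hr.le) hs0.le
          · exact Real.rpow_le_rpow_of_nonpos h3 (norm_lower r _ hr0 hr.le) (by linarith)
    _ = (∏ i ∈ T, (2:ℝ)^s) * ∏ i ∈ T, |Real.sin (γ - β i)| ^ (-s) := Finset.prod_mul_distrib
    _ ≤ _ := by
        rw [mul_assoc]
        exact mul_le_mul_of_nonneg_left (h γ fun i _ => hγ i) (by positivity)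

lemma F_cont (n : ℕ) (s r : ℝ) (α β : Fin (n+1) → ℝ) (hr0 : 0 ≤ r) (hr : r < 1) :
    Continuous fun γ : ℝ => ∏ i, fac s (α i) (β i) (r * Complex.exp (2 * γ * Complex.I)) := by
  refine continuous_finsetProd _ fun i _ => ?_
  rw [continuous_iff_continuousAt]
  intro γ
  have h1 := (fac_diff s (α i) (β i) _ (exp_norm_lt r γ hr0 hr)).continuousAt
  exact ContinuousAt.comp (f := fun γ : ℝ => (r:ℂ) * Complex.exp (2 * γ * Complex.I)) h1 (by fun_prop)

lemma mean_val (n : ℕ) (s r : ℝ) (α β : Fin (n+1) → ℝ) (hr0 : 0 ≤ r) (hr : r < 1) :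
    ∫ γ in (0:ℝ)..π, ∏ i, fac s (α i) (β i) (r * Complex.exp (2 * γ * Complex.I)) = π := by
  have hd : DiffContOnCl ℂ (fun z => ∏ i, fac s (α i) (β i) z) (Metric.ball 0 |r|) := by
    apply DifferentiableOn.diffContOnCl
    intro z hz
    have hz' : ‖z‖ < 1 := by
      have := Metric.closure_ball_subset_closedBall hz
      rw [mem_closedBall_zero_iff, abs_of_nonneg hr0] at this
      linarith
    apply DifferentiableAt.differentiableWithinAt
    apply DifferentiableAt.fun_finsetProd
    intro i _
    exact fac_diff _ _ _ _ hz'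
  have h := hd.circleAverage
  rw [Real.circleAverage_def] at h
  have h1 : ∏ i, fac s (α i) (β i) 0 = 1 := by simp [fac]
  rw [h1] at h
  have h2 := intervalIntegral.integral_comp_mul_left (a := 0) (b := π) (c := 2)
    (fun θ : ℝ => ∏ i, fac s (α i) (β i) (circleMap 0 r θ)) (by norm_num)
  have h3 : ∀ γ : ℝ, circleMap 0 r (2 * γ) = r * Complex.exp (2 * γ * Complex.I) := by
    intro γ; simp [circleMap]
  simp only [h3] at h2
  rw [h2, mul_zero]
  have hp : (π : ℂ) ≠ 0 := by exact_mod_cast Real.pi_ne_zero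
  rw [Complex.real_smul] at h ⊢
  push_cast at h ⊢
  field_simp at h ⊢
  linear_combination h

lemma im_limit (n : ℕ) (s : ℝ) (α β : Fin (n+1) → ℝ) (hαβ : ∀ i, α i ≤ β i)
    (hm : ∀ i j : Fin (n+1), i < j → β i ≤ α j) (h0 : ∀ i, 0 ≤ α i) (hpi : ∀ i, β i ≤ π)
    (γ : ℝ) (hγ0 : 0 < γ) (hγ : γ < π) (ha : ∀ i, γ ≠ α i) (hb : ∀ i, γ ≠ β i) :
    ((∏ i, fac s (α i) (β i) (Complex.exp (2 * γ * Complex.I))) *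
      Complex.exp (((s * (π - ∑ i, (β i - α i)) : ℝ) : ℂ) * Complex.I)).im
    = Real.sin (s * π) * ∏ i, (if γ ∈ Set.Icc (α i) (β i) then 0
              else (Real.sin (α i - γ) / Real.sin (β i - γ)) ^ s) := by
  classical
  have hE : Complex.exp (((s * (π - ∑ i, (β i - α i)) : ℝ) : ℂ) * Complex.I)
      = Complex.exp ((s * π : ℝ) * Complex.I) * ∏ i, Complex.exp (-(s * (β i - α i : ℝ) * Complex.I)) := by
    rw [← Complex.exp_sum, ← Complex.exp_add]
    congr 1
    push_cast
    rw [Finset.sum_neg_distrib, ← Finset.sum_mul, ← Finset.mul_sum]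
    ring
  have hEE : ∀ x : ℂ, Complex.exp x * Complex.exp (-x) = 1 := by
    intro x; rw [← Complex.exp_add]; simp
  have hout : ∀ i, γ ∉ Set.Icc (α i) (β i) →
      fac s (α i) (β i) (Complex.exp (2 * γ * Complex.I)) * Complex.exp (-(s * (β i - α i : ℝ) * Complex.I))
      = (((Real.sin (α i - γ) / Real.sin (β i - γ)) ^ s : ℝ) : ℂ) := by
    intro i hi
    rw [fac_out s (α i) (β i) γ (h0 i) (hαβ i) (hpi i) hγ0 hγ, mul_assoc, hEE, mul_one]
    by_contra hc
    push Not at hc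
    exact hi hc
  rw [hE, mul_left_comm, ← Finset.prod_mul_distrib]
  by_cases hex : ∃ i, γ ∈ Set.Icc (α i) (β i)
  · obtain ⟨i, hi⟩ := hex
    have hi1 : α i < γ := lt_of_le_of_ne hi.1 (ha i).symm
    have hi2 : γ < β i := lt_of_le_of_ne hi.2 (hb i)
    have hz0 : ∏ i, (if γ ∈ Set.Icc (α i) (β i) then 0
              else (Real.sin (α i - γ) / Real.sin (β i - γ)) ^ s) = 0 :=
      Finset.prod_eq_zero (Finset.mem_univ i) (by rw [if_pos hi])
    rw [hz0, mul_zero]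
    obtain ⟨R, hR⟩ := fac_in s (α i) (β i) γ (h0 i) (hpi i) hi1 hi2
    have hoth : ∀ j ∈ Finset.univ.erase i, γ ∉ Set.Icc (α j) (β j) := by
      intro j hj hc
      rcases lt_or_gt_of_ne (Finset.ne_of_mem_erase hj) with h | h
      · have := hm _ _ h; linarith [hc.2]
      · have := hm _ _ h; linarith [hc.1]
    rw [← Finset.mul_prod_erase _ _ (Finset.mem_univ i),
      Finset.prod_congr rfl (fun j hj => hout j (hoth j hj)), ← Complex.ofReal_prod, hR]
    have : Complex.exp ((s * π : ℝ) * Complex.I) * (Complex.exp (s * (β i - α i - π : ℝ) * Complex.I)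
       * Complex.exp (-(s * (β i - α i : ℝ) * Complex.I))) = 1 := by
      rw [← Complex.exp_add, ← Complex.exp_add, ← Complex.exp_zero]
      congr 1; push_cast; ring
    set P : ℝ := ∏ j ∈ Finset.univ.erase i, (Real.sin (α j - γ) / Real.sin (β j - γ)) ^ s
    have h2 : Complex.exp ((s * π : ℝ) * Complex.I) * (R * Complex.exp (s * (β i - α i - π : ℝ) * Complex.I)
       * Complex.exp (-(s * (β i - α i : ℝ) * Complex.I)) * P) = ((R * P : ℝ) : ℂ) := by
      push_cast at this ⊢
      linear_combination (R * P : ℂ) * this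
    rw [h2, Complex.ofReal_im]
  · push Not at hex
    rw [Finset.prod_congr rfl (fun j _ => hout j (hex j)), ← Complex.ofReal_prod, Complex.im_mul_ofReal,
      Complex.exp_ofReal_mul_I_im]
    congr 1
    exact Finset.prod_congr rfl fun j _ => by rw [if_neg (hex j)]

open Filter Topology in
lemma main_int (n : ℕ) (s : ℝ) (hs0 : 0 < s) (hs1 : s < 1) (α β : Fin (n+1) → ℝ) (hαβ : ∀ i, α i ≤ β i)
    (hm : ∀ i j : Fin (n+1), i < j → β i ≤ α j) (h0 : ∀ i, 0 ≤ α i) (hpi : ∀ i, β i ≤ π) :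
    Real.sin (s * π) * ∫ γ in (0:ℝ)..π, ∏ i, (if γ ∈ Set.Icc (α i) (β i) then 0
              else (Real.sin (α i - γ) / Real.sin (β i - γ)) ^ s)
      = π * Real.sin (s * (π - ∑ i, (β i - α i))) := by
  rw [← intervalIntegral.integral_const_mul]
  set c : ℂ := Complex.exp (((s * (π - ∑ i, (β i - α i)) : ℝ) : ℂ) * Complex.I) with hc
  have hcn : ‖c‖ = 1 := Complex.norm_exp_ofReal_mul_I _
  obtain ⟨C, T, hCT⟩ := domin n s hs0 α β hαβ hm h0 hpi
  set H : ℝ → ℝ → ℝ := fun r γ =>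
    ((∏ i, fac s (α i) (β i) (r * Complex.exp (2 * γ * Complex.I))) * c).im with hH
  have hev : ∀ᶠ r : ℝ in 𝓝[<] 1, 0 ≤ r ∧ r < 1 := by
    filter_upwards [Ioo_mem_nhdsLT (show (0:ℝ) < 1 by norm_num)] with r hr
    exact ⟨hr.1.le, hr.2⟩
  have hval : ∀ r : ℝ, 0 ≤ r → r < 1 → ∫ γ in (0:ℝ)..π, H r γ = π * Real.sin (s * (π - ∑ i, (β i - α i))) := by
    intro r hr0 hr
    have hcont := (F_cont n s r α β hr0 hr).mul (continuous_const (y := c))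
    have h1 := Complex.imCLM.intervalIntegral_comp_comm (hcont.intervalIntegrable (μ := MeasureTheory.volume) 0 π)
    simp only [Complex.imCLM_apply, Pi.mul_apply] at h1
    simp only [hH]
    rw [h1, intervalIntegral.integral_mul_const, mean_val n s r α β hr0 hr, Complex.im_ofReal_mul, hc,
      Complex.exp_ofReal_mul_I_im]
  have hae : ∀ᵐ γ : ℝ, γ ≠ π ∧ (∀ i, γ ≠ α i) ∧ (∀ i, γ ≠ β i) := by
    have hne : ∀ x : ℝ, ∀ᵐ γ : ℝ, γ ≠ x := fun x => by simp [MeasureTheory.ae_iff]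
    exact (hne π).and ((MeasureTheory.ae_all_iff.2 fun i => hne _).and (MeasureTheory.ae_all_iff.2 fun i => hne _))
  have hsin : ∀ γ x : ℝ, 0 < γ → γ < π → 0 ≤ x → x ≤ π → γ ≠ x → Real.sin (γ - x) ≠ 0 := by
    intro γ x h1 h2 h3 h4 h5 h
    rcases lt_or_gt_of_ne h5 with h6 | h6
    · have := Real.sin_neg_of_neg_of_neg_pi_lt (x := γ - x) (by linarith) (by linarith)
      linarith
    · have := Real.sin_pos_of_pos_of_lt_pi (x := γ - x) (by linarith) (by linarith)
      linarith
  have hlim := intervalIntegral.tendsto_integral_filter_of_dominated_convergence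
    (μ := MeasureTheory.volume) (a := 0) (b := π) (l := 𝓝[<] (1:ℝ)) (F := H)
    (f := fun γ => Real.sin (s * π) * ∏ i, (if γ ∈ Set.Icc (α i) (β i) then 0
              else (Real.sin (α i - γ) / Real.sin (β i - γ)) ^ s))
    (fun γ => C * (1 + ∑ i ∈ T, |Real.sin (γ - β i)| ^ (-s))) ?_ ?_ ?_ ?_
  · refine tendsto_nhds_unique hlim (tendsto_const_nhds.congr' ?_)
    filter_upwards [hev] with r hr
    exact (hval r hr.1 hr.2).symm
  · filter_upwards [hev] with r hr
    have hcont := (F_cont n s r α β hr.1 hr.2).mul (continuous_const (y := c))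
    exact (Complex.continuous_im.comp hcont).aestronglyMeasurable
  · filter_upwards [hev] with r hr
    filter_upwards [hae] with γ hγ hγ2
    rw [Set.uIoc_of_le Real.pi_pos.le] at hγ2
    have hlt : γ < π := lt_of_le_of_ne hγ2.2 hγ.1
    refine le_trans ?_ (hCT r γ hr.1 hr.2 fun i => hsin γ _ hγ2.1 hlt ((h0 i).trans (hαβ i)) (hpi i) (hγ.2.2 i))
    simp only [hH]
    refine (Complex.abs_im_le_norm _).trans ?_
    rw [norm_mul, hcn, mul_one]
  · refine IntervalIntegrable.const_mul ?_ C
    refine (intervalIntegrable_const).add ?_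
    have := IntervalIntegrable.sum T (f := fun i (γ : ℝ) => |Real.sin (γ - β i)| ^ (-s))
      (fun i _ => kernel_int s (β i) hs0 hs1)
    have e : (∑ i ∈ T, fun γ : ℝ => |Real.sin (γ - β i)| ^ (-s))
        = fun γ : ℝ => ∑ i ∈ T, |Real.sin (γ - β i)| ^ (-s) := by
      ext γ; simp
    rw [e] at this
    exact this
  · filter_upwards [hae] with γ hγ hγ2
    rw [Set.uIoc_of_le Real.pi_pos.le] at hγ2
    have hlt : γ < π := lt_of_le_of_ne hγ2.2 hγ.1
    rw [← im_limit n s α β hαβ hm h0 hpi γ hγ2.1 hlt hγ.2.1 hγ.2.2]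
    simp only [hH]
    refine (Complex.continuous_im.tendsto _).comp (Tendsto.mul_const _ ?_)
    refine tendsto_finsetProd _ fun i _ => ?_
    have hcat := fac_cont s (α i) (β i) γ (hsin γ _ hγ2.1 hlt (h0 i) ((hαβ i).trans (hpi i)) (hγ.2.1 i))
      (hsin γ _ hγ2.1 hlt ((h0 i).trans (hαβ i)) (hpi i) (hγ.2.2 i))
    refine Tendsto.comp (g := fac s (α i) (β i)) (y := 𝓝 (Complex.exp (2 * γ * Complex.I))) hcat ?_
    have : Tendsto (fun r : ℝ => (r:ℂ) * Complex.exp (2 * γ * Complex.I)) (𝓝 1)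
        (𝓝 (((1:ℝ):ℂ) * Complex.exp (2 * γ * Complex.I))) := by
      apply Continuous.tendsto; fun_prop
    rw [Complex.ofReal_one, one_mul] at this
    exact this.mono_left nhdsWithin_le_nhds

/-- **Integral identity (Lemma 5.2).** For `p ≥ 1`,
`0 ≤ α₁ ≤ β₁ ≤ ⋯ ≤ α_p ≤ β_p ≤ π` and `u ∈ (0, 1/2)`,
`(1/π)∫₀^π ∏ᵢ (sin(αᵢ−γ)/sin(βᵢ−γ))^{2u} 1{γ∉[αᵢ,βᵢ]} dγ
  = sin(2u(π − ∑ᵢ(βᵢ−αᵢ)))/sin(2πu)`,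
where the integrand is `0` whenever `γ` lies in one of the intervals `[αᵢ,βᵢ]`. -/
theorem stmt_1 (p : ℕ) (hp : 0 < p) (α β : Fin p → ℝ) (u : ℝ)
    (hu : u ∈ Set.Ioo (0:ℝ) (1/2))
    (h0 : 0 ≤ α ⟨0, hp⟩)
    (hαβ : ∀ i, α i ≤ β i)
    (hβα : ∀ i : Fin p, ∀ h : i.val + 1 < p, β i ≤ α ⟨i.val + 1, h⟩)
    (hπ : β ⟨p - 1, Nat.sub_lt hp one_pos⟩ ≤ π) :
    (1/π) * ∫ γ in (0:ℝ)..π,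
        ∏ i, (if γ ∈ Set.Icc (α i) (β i) then 0
              else (Real.sin (α i - γ) / Real.sin (β i - γ)) ^ (2*u))
      = Real.sin (2*u*(π - ∑ i, (β i - α i))) / Real.sin (2*π*u) := by
  obtain ⟨hu0, hu1⟩ := hu
  obtain ⟨n, rfl⟩ : ∃ n, p = n + 1 := ⟨p - 1, by omega⟩
  have hm := mono_facts n α β hαβ hβα
  have h0' : ∀ i, 0 ≤ α i := by
    intro i
    rcases eq_or_ne i 0 with e | e
    · rw [e]; exact h0
    · have h1 := hm 0 i (Fin.pos_of_ne_zero e)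
      have h2 := hαβ 0
      have h3 : 0 ≤ α 0 := h0
      linarith
  have hl : β (Fin.last n) ≤ π := hπ
  have hpi : ∀ i, β i ≤ π := by
    intro i
    rcases eq_or_ne i (Fin.last n) with e | e
    · rw [e]; exact hl
    · have h1 := hm i (Fin.last n) (lt_of_le_of_ne (Fin.le_last i) e)
      have h2 := hαβ (Fin.last n)
      linarith
  have key := main_int n (2*u) (by linarith) (by linarith) α β hαβ hm h0' hpi
  have hpos : 0 < Real.sin (2 * u * π) :=
    Real.sin_pos_of_pos_of_lt_pi (by positivity) (by nlinarith [Real.pi_pos])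
  rw [show 2 * π * u = 2 * u * π by ring, eq_div_iff hpos.ne', one_div, mul_assoc,
    mul_comm _ (Real.sin (2 * u * π)), key, ← mul_assoc, inv_mul_cancel₀ Real.pi_ne_zero, one_mul]
end
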